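/- arXiv:1409.8009 — 2 statements merged into one kernel-verified Lean document; each statement's English description precedes it below -/
import Mathlib

section
/- (Strong-to-weak disorder coupling / hedgehog identities.) Let H(0) be a bounded self-adjoint operator on ℓ²(ℤ^d), let U : ℤ^d → ℝ be bounded, and let z ∈ ℂ ∖ ℝ. On ℓ²(ℤ^d) ⊕ ℓ²(ℤ^d), define the bounded self-adjoint operator H^Ш by H^Ш(ψ₁, ψ₀) = (Uψ₁ − ψ₀, −ψ₁ + H(0)ψ₀), where Uψ₁ denotes pointwise multiplication. Let U_z^# denote multiplication by the bounded function x ↦ (z − U(x))^{−1}, and let P₀, P₁ be the orthogonal projections onto the second and first summands respectively. Then: (i) H(0) + U_z^# − z is boundedly invertible and P₀ (H^Ш − z)^{−1} P₀* = (H(0) + U_z^# − z)^{−1}; (ii) −(H(0) − z)^{−1} + U − z is boundedly invertible and P₁ (H^Ш − z)^{−1} P₁* = (−(H(0) − z)^{−1} + U − z)^{−1}. -/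
open scoped Classical

noncomputable section

abbrev Site (d : ℕ) := Fin d → ℤ

abbrev l2 (d : ℕ) := lp (fun _ : Site d => ℂ) 2

/-! The operator `H^Ш` has the block form `[[U, -1], [-1, H(0)]]`, and it is self-adjoint, as are
its diagonal blocks, so `H^Ш - z`, `U - z` and `H(0) - z` are invertible. Gaussian elimination with
respect to an invertible diagonal block shows that the compression of `(H^Ш - z)⁻¹` to the other
summand is the inverse of the Schur complement of that block. -/

open ContinuousLinearMap

theorem isUnit_and_inverse_eq_of_mul_eq_one {M₀ : Type*} [MonoidWithZero M₀] {a b : M₀}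
    (hab : a * b = 1) (hba : b * a = 1) : IsUnit a ∧ Ring.inverse a = b :=
  ⟨⟨⟨a, b, hab, hba⟩, rfl⟩, Ring.inverse_unit ⟨a, b, hab, hba⟩⟩

section BlockOperators

variable {R E F : Type*} [Ring R]
  [TopologicalSpace E] [AddCommGroup E] [IsTopologicalAddGroup E] [Module R E]
  [TopologicalSpace F] [AddCommGroup F] [IsTopologicalAddGroup F] [Module R F]
  {A : E →L[R] E} {B : F →L[R] E} {C : E →L[R] F} {D : F →L[R] F}

/-- The operator on `E × F` with block matrix `[[A, B], [C, D]]`. -/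
def blockOp (A : E →L[R] E) (B : F →L[R] E) (C : E →L[R] F) (D : F →L[R] F) :
    E × F →L[R] E × F :=
  (A.coprod B).prod (C.coprod D)

@[simp]
theorem blockOp_apply (ψ : E × F) : blockOp A B C D ψ = (A ψ.1 + B ψ.2, C ψ.1 + D ψ.2) := rfl

/-- The Schur complement `D - C A⁻¹ B` of the block `A` in `[[A, B], [C, D]]`, meaningful when `A`
is invertible. The Schur complement of `D` is `schurComplement D C B A`. -/
def schurComplement (A : E →L[R] E) (B : F →L[R] E) (C : E →L[R] F) (D : F →L[R] F) : F →L[R] F :=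
  D - C ∘L Ring.inverse A ∘L B

theorem schurComplement_neg_one_neg_one (A D : E →L[R] E) :
    schurComplement A (-1) (-1) D = D - Ring.inverse A := by
  ext
  simp [schurComplement]

theorem blockOp_sub_smul_one {S : Type*} [Monoid S]
    [DistribMulAction S E] [SMulCommClass R S E] [ContinuousConstSMul S E]
    [DistribMulAction S F] [SMulCommClass R S F] [ContinuousConstSMul S F]
    (A : E →L[R] E) (B : F →L[R] E) (C : E →L[R] F) (D : F →L[R] F) (z : S) :
    blockOp A B C D - z • 1 = blockOp (A - z • 1) B C (D - z • 1) := by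
  ext <;> simp

theorem blockOp_apply_neg_inverse (hA : IsUnit A) (y : F) :
    blockOp A B C D (-Ring.inverse A (B y), y) = (0, schurComplement A B C D y) := by
  have hAB : A (Ring.inverse A (B y)) = B y :=
    DFunLike.congr_fun (Ring.mul_inverse_cancel A hA) (B y)
  ext <;> simp [schurComplement, hAB, neg_add_eq_sub]

theorem fst_eq_neg_inverse_of_blockOp_apply_eq (hA : IsUnit A) {ψ : E × F} {y : F}
    (hψ : blockOp A B C D ψ = (0, y)) : ψ.1 = -Ring.inverse A (B ψ.2) := by
  have hfst : A ψ.1 = -B ψ.2 := eq_neg_of_add_eq_zero_left (congrArg Prod.fst hψ)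
  calc ψ.1 = Ring.inverse A (A ψ.1) := (DFunLike.congr_fun (Ring.inverse_mul_cancel A hA) ψ.1).symm
    _ = -Ring.inverse A (B ψ.2) := by rw [hfst, map_neg]

theorem isUnit_schurComplement_and_inverse_eq (hA : IsUnit A) (hT : IsUnit (blockOp A B C D)) :
    IsUnit (schurComplement A B C D) ∧ Ring.inverse (schurComplement A B C D) =
      snd R E F ∘L Ring.inverse (blockOp A B C D) ∘L inr R E F := by
  apply isUnit_and_inverse_eq_of_mul_eq_one
  · ext y
    set ψ := Ring.inverse (blockOp A B C D) (0, y)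
    have hψ : blockOp A B C D ψ = (0, y) :=
      DFunLike.congr_fun (Ring.mul_inverse_cancel _ hT) (0, y)
    have hψ_eq : (-Ring.inverse A (B ψ.2), ψ.2) = ψ :=
      Prod.ext (fst_eq_neg_inverse_of_blockOp_apply_eq hA hψ).symm rfl
    have hS := blockOp_apply_neg_inverse (B := B) (C := C) (D := D) hA ψ.2
    rw [hψ_eq, hψ] at hS
    exact (congrArg Prod.snd hS).symm
  · ext y
    have hinv : Ring.inverse (blockOp A B C D) (0, schurComplement A B C D y) =
        (-Ring.inverse A (B y), y) := by
      rw [← blockOp_apply_neg_inverse hA]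
      exact DFunLike.congr_fun (Ring.inverse_mul_cancel _ hT) _
    exact congrArg Prod.snd hinv

theorem blockOp_swap : blockOp D C B A =
    ContinuousLinearEquiv.prodComm R E F ∘L blockOp A B C D ∘L
      ContinuousLinearEquiv.prodComm R F E := by
  ext <;> simp

theorem inverse_blockOp_swap : Ring.inverse (blockOp D C B A) =
    ContinuousLinearEquiv.prodComm R E F ∘L Ring.inverse (blockOp A B C D) ∘L
      ContinuousLinearEquiv.prodComm R F E := by
  rw [blockOp_swap (A := A), ringInverse_eq_inverse, ringInverse_eq_inverse, inverse_equiv_comp,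
    inverse_comp_equiv]
  rfl

end BlockOperators

theorem isUnit_sub_smul_one_of_isSelfAdjoint {𝒜 : Type*} [CStarAlgebra 𝒜] {a : 𝒜}
    (ha : IsSelfAdjoint a) {z : ℂ} (hz : z.im ≠ 0) : IsUnit (a - z • 1) := by
  have hmem : z ∉ spectrum ℂ a := fun h => hz (ha.im_eq_zero_of_mem_spectrum h)
  rw [spectrum.notMem_iff, Algebra.algebraMap_eq_smul_one] at hmem
  simpa only [neg_sub] using hmem.neg

section HilbertSpace

variable {E F : Type*} [NormedAddCommGroup E] [InnerProductSpace ℂ E] [CompleteSpace E]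
  [NormedAddCommGroup F] [InnerProductSpace ℂ F] [CompleteSpace F]
  {V : E →L[ℂ] E} {H : F →L[ℂ] F}

-- `E × F` carries the sup norm, so self-adjointness only makes sense on `WithLp 2 (E × F)`.
theorem isSelfAdjoint_conj_blockOp (hV : IsSelfAdjoint V) (hH : IsSelfAdjoint H) (K : E →L[ℂ] F) :
    IsSelfAdjoint ((WithLp.prodContinuousLinearEquiv 2 ℂ E F).symm.conjContinuousAlgEquiv
      (blockOp V (adjoint K) K H)) := by
  rw [isSelfAdjoint_iff_isSymmetric]
  intro φ ψ
  have hVφψ : inner ℂ (V φ.fst) ψ.fst = inner ℂ φ.fst (V ψ.fst) := hV.isSymmetric _ _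
  have hHφψ : inner ℂ (H φ.snd) ψ.snd = inner ℂ φ.snd (H ψ.snd) := hH.isSymmetric _ _
  change inner ℂ (V φ.fst + adjoint K φ.snd) ψ.fst + inner ℂ (K φ.fst + H φ.snd) ψ.snd =
    inner ℂ φ.fst (V ψ.fst + adjoint K ψ.snd) + inner ℂ φ.snd (K ψ.fst + H ψ.snd)
  simp only [inner_add_left, inner_add_right, adjoint_inner_left, adjoint_inner_right, hVφψ, hHφψ]
  ring

theorem isUnit_blockOp_sub_smul_one (hV : IsSelfAdjoint V) (hH : IsSelfAdjoint H) (K : E →L[ℂ] F)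
    {z : ℂ} (hz : z.im ≠ 0) : IsUnit (blockOp V (adjoint K) K H - z • 1) := by
  let conj := (WithLp.prodContinuousLinearEquiv 2 ℂ E F).symm.conjContinuousAlgEquiv
  have hconj : IsUnit (conj (blockOp V (adjoint K) K H - z • 1)) := by
    rw [map_sub, map_smul, map_one]
    exact isUnit_sub_smul_one_of_isSelfAdjoint (isSelfAdjoint_conj_blockOp hV hH K) hz
  exact (isUnit_map_iff conj _).mp hconj

theorem hedgehog_coupling_general (hV : IsSelfAdjoint V) (hH : IsSelfAdjoint H) (K : E →L[ℂ] F)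
    {z : ℂ} (hz : z.im ≠ 0) :
    IsUnit (blockOp V (adjoint K) K H - z • 1)
    ∧ IsUnit (schurComplement (V - z • 1) (adjoint K) K (H - z • 1))
    ∧ snd ℂ E F ∘L Ring.inverse (blockOp V (adjoint K) K H - z • 1) ∘L inr ℂ E F
        = Ring.inverse (schurComplement (V - z • 1) (adjoint K) K (H - z • 1))
    ∧ IsUnit (schurComplement (H - z • 1) K (adjoint K) (V - z • 1))
    ∧ fst ℂ E F ∘L Ring.inverse (blockOp V (adjoint K) K H - z • 1) ∘L inl ℂ E F
        = Ring.inverse (schurComplement (H - z • 1) K (adjoint K) (V - z • 1)) := by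
  have hT := isUnit_blockOp_sub_smul_one hV hH K hz
  have hT' := isUnit_blockOp_sub_smul_one hH hV (adjoint K) hz
  rw [adjoint_adjoint] at hT'
  rw [blockOp_sub_smul_one] at hT hT' ⊢
  obtain ⟨hS₀, hS₀_inv⟩ := isUnit_schurComplement_and_inverse_eq
    (isUnit_sub_smul_one_of_isSelfAdjoint hV hz) hT
  obtain ⟨hS₁, hS₁_inv⟩ := isUnit_schurComplement_and_inverse_eq
    (isUnit_sub_smul_one_of_isSelfAdjoint hH hz) hT'
  refine ⟨hT, hS₀, hS₀_inv.symm, hS₁, ?_⟩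
  rw [hS₁_inv, inverse_blockOp_swap]
  rfl

end HilbertSpace

section DiagonalOperators

variable {ι 𝕜 : Type*} {G : ι → Type*} [∀ i, NormedAddCommGroup (G i)]

theorem isSelfAdjoint_of_apply_eq_ofReal_smul [RCLike 𝕜] [∀ i, InnerProductSpace 𝕜 (G i)]
    [∀ i, CompleteSpace (G i)] {A : lp G 2 →L[𝕜] lp G 2} {u : ι → ℝ}
    (hA : ∀ f i, A f i = (u i : 𝕜) • f i) : IsSelfAdjoint A := by
  rw [isSelfAdjoint_iff_isSymmetric]
  intro f g
  simp [lp.inner_eq_tsum, hA, inner_smul_left, inner_smul_right]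

variable [NormedField 𝕜] [∀ i, NormedSpace 𝕜 (G i)] {p : ENNReal} [Fact (1 ≤ p)]
  {A B : lp G p →L[𝕜] lp G p} {a : ι → 𝕜}

theorem inverse_eq_of_apply_eq_inv_smul (ha : ∀ i, a i ≠ 0)
    (hA : ∀ f i, A f i = a i • f i) (hB : ∀ f i, B f i = (a i)⁻¹ • f i) :
    Ring.inverse A = B := by
  refine (isUnit_and_inverse_eq_of_mul_eq_one ?_ ?_).2 <;>
  · ext f i
    simp [hA, hB, ha]

theorem inverse_sub_smul_one_eq_neg_of_apply_eq_inv_smul {z : 𝕜} (hz : ∀ i, z ≠ a i)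
    (hA : ∀ f i, A f i = a i • f i) (hB : ∀ f i, B f i = (z - a i)⁻¹ • f i) :
    Ring.inverse (A - z • 1) = -B := by
  refine inverse_eq_of_apply_eq_inv_smul (a := fun i => a i - z)
    (fun i => sub_ne_zero.mpr (hz i).symm) (fun f i => ?_) fun f i => ?_
  · change A f i - z • f i = (a i - z) • f i
    rw [hA, sub_smul]
  · change -B f i = (a i - z)⁻¹ • f i
    rw [hB, ← neg_sub z, inv_neg, neg_smul]

end DiagonalOperators

/-- relations (6.2), strong-to-weak disorder coupling on the hedgehog
lattice: the diagonal blocks of the resolvent of `H^Ш` are resolvents of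
`H(0) + U_z^#` and of `-G_z[H(0)] + U`. -/
theorem hedgehog_coupling
    {d : ℕ} (H0 : l2 d →L[ℂ] l2 d) (hH0 : IsSelfAdjoint H0)
    (U : Site d → ℝ) (hU : ∃ M : ℝ, ∀ x, |U x| ≤ M)
    (z : ℂ) (hz : z.im ≠ 0)
    -- multiplication by U
    (MU : l2 d →L[ℂ] l2 d) (hMU : ∀ (ψ : l2 d) (x : Site d), MU ψ x = (U x : ℂ) * ψ x)
    -- multiplication by x ↦ (z - U(x))⁻¹
    (Mz : l2 d →L[ℂ] l2 d) (hMz : ∀ (ψ : l2 d) (x : Site d), Mz ψ x = ((z : ℂ) - (U x : ℂ))⁻¹ * ψ x)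
    -- the hedgehog operator H^Ш (ψ₁, ψ₀) = (U ψ₁ - ψ₀, -ψ₁ + H(0) ψ₀)
    (HSh : (l2 d × l2 d) →L[ℂ] (l2 d × l2 d))
    (hHSh : ∀ ψ : l2 d × l2 d, HSh ψ = (MU ψ.1 - ψ.2, -ψ.1 + H0 ψ.2)) :
    IsUnit (HSh - z • 1)
    ∧ IsUnit (H0 + Mz - z • 1)
    ∧ (ContinuousLinearMap.snd ℂ (l2 d) (l2 d)).comp
        ((Ring.inverse (HSh - z • 1)).comp (ContinuousLinearMap.inr ℂ (l2 d) (l2 d)))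
        = Ring.inverse (H0 + Mz - z • 1)
    ∧ IsUnit (-(Ring.inverse (H0 - z • 1)) + MU - z • 1)
    ∧ (ContinuousLinearMap.fst ℂ (l2 d) (l2 d)).comp
        ((Ring.inverse (HSh - z • 1)).comp (ContinuousLinearMap.inl ℂ (l2 d) (l2 d)))
        = Ring.inverse (-(Ring.inverse (H0 - z • 1)) + MU - z • 1) := by
  have hMU_sa : IsSelfAdjoint MU := isSelfAdjoint_of_apply_eq_ofReal_smul hMU
  have hzU : ∀ x, z ≠ U x := fun x h => hz (by rw [h, Complex.ofReal_im])
  have hMz_inv : Ring.inverse (MU - z • 1) = -Mz :=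
    inverse_sub_smul_one_eq_neg_of_apply_eq_inv_smul hzU hMU hMz
  have hHSh_block : HSh = blockOp MU (-1) (-1) H0 :=
    ContinuousLinearMap.ext fun ψ => by simp [hHSh, sub_eq_add_neg]
  have hadj : adjoint (-1 : l2 d →L[ℂ] l2 d) = -1 := by
    rw [← star_eq_adjoint, star_neg, star_one]
  have hS₀ : H0 + Mz - z • 1 = schurComplement (MU - z • 1) (-1) (-1) (H0 - z • 1) := by
    rw [schurComplement_neg_one_neg_one, hMz_inv]
    abel
  have hS₁ : -(Ring.inverse (H0 - z • 1)) + MU - z • 1 =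
      schurComplement (H0 - z • 1) (-1) (-1) (MU - z • 1) := by
    rw [schurComplement_neg_one_neg_one]
    abel
  rw [hHSh_block, hS₀, hS₁]
  simpa only [hadj] using hedgehog_coupling_general hMU_sa hH0 (-1) hz

end
end

section
/- (Decoupling lemma.) Let μ be a probability measure on ℝ which is α-regular for some α > 0 (there is C₀ ≥ 0 with μ([t−ε,t+ε]) ≤ C₀ε^α for all t ∈ ℝ, ε > 0) and which has finite q-moment M_q = ∫|t|^q dμ(t) < ∞ for some q > 0. Let l, m be nonnegative integers and s, r > 0 satisfy rm < α and q ≥ (sl + rm)·α/(α − rm). Then there exist constants C, C′ > 0, depending only on μ, l, m, s, r, such that for all a₁, …, a_l, b₁, …, b_m ∈ ℂ, writing I = ∫ (∏_{j=1}^l |v − a_j|^s) / (∏_{i=1}^m |v − b_i|^r) dμ(v) and R = (∏_{j=1}^l (1+|a_j|)^s) / (∏_{i=1}^m (1+|b_i|)^r), one has I ≤ C·R and R ≤ C′·I. -/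
open MeasureTheory
open scoped ENNReal NNReal

noncomputable section

/-!
With `σ = s * l` and `ρ = r * m`, the integrand is at most the decoupled product times
`(1 + ‖v‖) ^ σ * (1 + ∑ᵢ ((1 + ‖bᵢ‖) / ‖v - bᵢ‖) ^ ρ)`, so the upper bound reduces to a single
pole `b`. Where `1 ≤ ‖v - b‖`, that term is dominated by the moment. On the unit ball around `b`,
whose mass is `O((1 + ‖b‖) ^ (-q))` by the moment bound, `α`-regularity controls the part within
distance `ε` of `b` by `ε ^ (α - ρ)`, and the mass controls the rest. Optimising `ε` gives a bound
`O((1 + ‖b‖) ^ (-q * (α - ρ) / α))`, which has to absorb the factor `(1 + ‖b‖) ^ (σ + ρ)`: this is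
the condition on `q`.

For the lower bound one integrates over a fixed ball from which small balls around the `aⱼ` have
been removed: by regularity the mass left is bounded below uniformly in the `aⱼ`, and there the
integrand is bounded below by a multiple of the decoupled product.
-/

lemma rpow_neg_le_rpow_neg_of_le {x y : ℝ≥0∞} {r : ℝ} (hr : 0 ≤ r) (h : x ≤ y) :
    y ^ (-r) ≤ x ^ (-r) := by
  simp only [ENNReal.rpow_neg]
  gcongr

lemma rpow_mul_rpow_neg_le_of_le_mul {x y c : ℝ≥0∞} {r : ℝ} (hr : 0 ≤ r) (h : x ≤ c * y) :
    x ^ r * y ^ (-r) ≤ c ^ r := by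
  rw [ENNReal.rpow_neg, ← div_eq_mul_inv]
  refine ENNReal.div_le_of_le_mul ?_
  rw [← ENNReal.mul_rpow_of_nonneg _ _ hr]
  gcongr

lemma rpow_neg_le_mul_rpow_neg_of_le_mul {x y c : ℝ≥0∞} {r : ℝ} (hr : 0 ≤ r) (hc₀ : c ≠ 0)
    (hc : c ≠ ⊤) (h : x ≤ c * y) : y ^ (-r) ≤ c ^ r * x ^ (-r) := by
  rw [ENNReal.rpow_neg x, ← div_eq_mul_inv,
    ENNReal.le_div_iff_mul_le (.inr (by simp [hc₀, hc])) (.inr (by finiteness)), mul_comm]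
  exact rpow_mul_rpow_neg_le_of_le_mul hr h

lemma prod_le_one_add_sum_pow_card {κ : Type*} [Fintype κ] (f : κ → ℝ≥0∞) :
    ∏ i, f i ≤ 1 + ∑ i, f i ^ Fintype.card κ := by
  cases isEmpty_or_nonempty κ
  · simp
  obtain ⟨i, hi⟩ := Finite.exists_max f
  calc ∏ i, f i ≤ f i ^ Fintype.card κ := Finset.prod_le_pow_card _ _ _ fun j _ => hi j
    _ ≤ ∑ i, f i ^ Fintype.card κ :=
        Finset.single_le_sum (f := fun i => f i ^ Fintype.card κ) (fun _ _ => zero_le)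
          (Finset.mem_univ i)
    _ ≤ 1 + ∑ i, f i ^ Fintype.card κ := le_add_self

lemma le_mul_div_sub {x α ρ : ℝ} (hx : 0 ≤ x) (hρ : 0 ≤ ρ) (hρα : ρ < α) :
    x ≤ x * α / (α - ρ) := by
  rw [le_div_iff₀ (sub_pos.2 hρα)]
  gcongr
  exact sub_le_self α hρ

section PseudoEMetricSpace

variable {X : Type*} [PseudoEMetricSpace X]

lemma edist_rpow_neg_le_tsum_indicator {ρ : ℝ} (hρ : 0 ≤ ρ) {x b : X} {ε : ℝ≥0} (hε : 0 < ε)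
    (hx : x ∈ Metric.closedEBall b ε) :
    edist x b ^ (-ρ) ≤ ∑' n : ℕ, (Metric.closedEBall b ↑(2⁻¹ ^ n * ε)).indicator
      (fun _ => ((2⁻¹ * (2⁻¹ ^ n * ε) : ℝ≥0) : ℝ≥0∞) ^ (-ρ)) x := by
  rw [Metric.mem_closedEBall] at hx
  rcases eq_or_ne (edist x b) 0 with h₀ | h₀
  · calc edist x b ^ (-ρ) ≤ ∑' _ : ℕ, (ε : ℝ≥0∞) ^ (-ρ) := by
          rw [ENNReal.tsum_const_eq_top_of_ne_zero (by simp [hε.ne'])]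
          exact le_top
      _ ≤ _ := by
          refine ENNReal.tsum_le_tsum fun n => ?_
          rw [Set.indicator_of_mem (by simp [h₀])]
          refine rpow_neg_le_rpow_neg_of_le hρ (ENNReal.coe_le_coe.2 ?_)
          rw [← mul_assoc, ← pow_succ']
          exact mul_le_of_le_one_left' (pow_le_one₀ zero_le two_inv_lt_one.le)
  · lift edist x b to ℝ≥0 using ne_top_of_le_ne_top ENNReal.coe_ne_top hx with d hd
    norm_cast at hx h₀
    obtain ⟨n, hn_lt, hn_le⟩ := exists_nat_pow_near_of_lt_one (x := d / ε) (y := 2⁻¹)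
      (by positivity) (by simpa [div_le_iff₀ hε] using hx) (by simp) two_inv_lt_one
    rw [lt_div_iff₀ hε, pow_succ', mul_assoc] at hn_lt
    rw [div_le_iff₀ hε] at hn_le
    refine le_trans ?_ (ENNReal.le_tsum n)
    rw [Set.indicator_of_mem (by simpa [← hd, -ENNReal.coe_mul] using hn_le)]
    exact rpow_neg_le_rpow_neg_of_le hρ (ENNReal.coe_le_coe.2 hn_lt.le)

variable [MeasurableSpace X]

lemma setLIntegral_edist_rpow_neg_le_add (μ : Measure X) {ρ : ℝ} (hρ : 0 ≤ ρ) (s : Set X) (b : X)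
    (ε : ℝ≥0∞) :
    ∫⁻ x in s, edist x b ^ (-ρ) ∂μ ≤
      ε ^ (-ρ) * μ s + ∫⁻ x in Metric.closedEBall b ε, edist x b ^ (-ρ) ∂μ := by
  have hpointwise (x : X) : edist x b ^ (-ρ) ≤
      ε ^ (-ρ) + (Metric.closedEBall b ε).indicator (fun x => edist x b ^ (-ρ)) x := by
    by_cases hx : x ∈ Metric.closedEBall b ε
    · rw [Set.indicator_of_mem hx]
      exact le_add_self
    · rw [Set.indicator_of_notMem hx, add_zero]
      exact rpow_neg_le_rpow_neg_of_le hρ (not_le.1 hx).le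
  calc ∫⁻ x in s, edist x b ^ (-ρ) ∂μ
      ≤ ε ^ (-ρ) * μ s +
          ∫⁻ x in s, (Metric.closedEBall b ε).indicator (fun x => edist x b ^ (-ρ)) x ∂μ := by
        refine (lintegral_mono hpointwise).trans_eq ?_
        rw [lintegral_add_left measurable_const, setLIntegral_const]
    _ ≤ _ := by
        grw [setLIntegral_le_lintegral s, lintegral_indicator_le]

/-- A measure is upper `α`-regular with constant `C` if closed balls of radius `ε` have mass at
most `C * ε ^ α`. Radii are finite, so nothing is said about the total mass. -/
def IsUpperRegular (μ : Measure X) (α : ℝ) (C : ℝ≥0) : Prop :=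
  ∀ (x : X) (ε : ℝ≥0), 0 < ε → μ (Metric.closedEBall x ε) ≤ C * (ε : ℝ≥0∞) ^ α

lemma IsUpperRegular.rpow_neg_half_mul_measure_closedEBall_le {μ : Measure X} {α : ℝ} {C : ℝ≥0}
    (hμ : IsUpperRegular μ α C) (ρ : ℝ) (b : X) {ε : ℝ≥0} (hε : 0 < ε) :
    ((2⁻¹ * ε : ℝ≥0) : ℝ≥0∞) ^ (-ρ) * μ (Metric.closedEBall b ε) ≤
      C * 2 ^ ρ * (ε : ℝ≥0∞) ^ (α - ρ) := by
  have hhalf : ((2⁻¹ * ε : ℝ≥0) : ℝ≥0∞) ^ (-ρ) = 2 ^ ρ * (ε : ℝ≥0∞) ^ (-ρ) := by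
    rw [ENNReal.coe_mul, ENNReal.coe_inv two_ne_zero,
      ENNReal.mul_rpow_of_ne_top (by simp) ENNReal.coe_ne_top, ENNReal.inv_rpow,
      ← ENNReal.rpow_neg, neg_neg, ENNReal.coe_ofNat]
  calc _ ≤ 2 ^ ρ * (ε : ℝ≥0∞) ^ (-ρ) * (C * (ε : ℝ≥0∞) ^ α) := by
        rw [hhalf]
        gcongr
        exact hμ b ε hε
    _ = C * 2 ^ ρ * (ε : ℝ≥0∞) ^ (α - ρ) := by
        rw [sub_eq_add_neg, ENNReal.rpow_add _ _ (by simpa using hε.ne') (by simp)]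
        ring

variable [OpensMeasurableSpace X]

lemma IsUpperRegular.exists_setLIntegral_closedEBall_le {μ : Measure X} {α ρ : ℝ} {C : ℝ≥0}
    (hμ : IsUpperRegular μ α C) (hρ : 0 ≤ ρ) (hρα : ρ < α) :
    ∃ K : ℝ≥0∞, K ≠ ⊤ ∧ ∀ (b : X) (ε : ℝ≥0), 0 < ε →
      ∫⁻ x in Metric.closedEBall b ε, edist x b ^ (-ρ) ∂μ ≤ K * (ε : ℝ≥0∞) ^ (α - ρ) := by
  have hratio : (2⁻¹ : ℝ≥0∞) ^ (α - ρ) < 1 :=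
    ENNReal.rpow_lt_one (by simp) (sub_pos.2 hρα)
  refine ⟨C * 2 ^ ρ * (1 - 2⁻¹ ^ (α - ρ))⁻¹, ?_, fun b ε hε => ?_⟩
  · have : (1 - (2⁻¹ : ℝ≥0∞) ^ (α - ρ))⁻¹ ≠ ⊤ := ENNReal.inv_ne_top.2 (tsub_pos_of_lt hratio).ne'
    finiteness
  have hscale (n : ℕ) : ((2⁻¹ ^ n * ε : ℝ≥0) : ℝ≥0∞) ^ (α - ρ) =
      (ε : ℝ≥0∞) ^ (α - ρ) * (2⁻¹ ^ (α - ρ)) ^ n := by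
    rw [ENNReal.coe_mul, ENNReal.mul_rpow_of_ne_top (by finiteness) (by finiteness), mul_comm,
      ENNReal.coe_pow, ENNReal.coe_inv two_ne_zero, ENNReal.coe_ofNat, ← ENNReal.rpow_natCast,
      ← ENNReal.rpow_natCast, ← ENNReal.rpow_mul, ← ENNReal.rpow_mul,
      mul_comm (n : ℝ)]
  have hball (n : ℕ) : MeasurableSet (Metric.closedEBall b ↑(2⁻¹ ^ n * ε)) :=
    Metric.isClosed_closedEBall.measurableSet
  calc ∫⁻ x in Metric.closedEBall b ε, edist x b ^ (-ρ) ∂μ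
      ≤ ∫⁻ x in Metric.closedEBall b ε, ∑' n : ℕ, (Metric.closedEBall b ↑(2⁻¹ ^ n * ε)).indicator
          (fun _ => ((2⁻¹ * (2⁻¹ ^ n * ε) : ℝ≥0) : ℝ≥0∞) ^ (-ρ)) x ∂μ :=
        setLIntegral_mono' Metric.isClosed_closedEBall.measurableSet
          fun x hx => edist_rpow_neg_le_tsum_indicator hρ hε hx
    _ ≤ ∑' n : ℕ, ((2⁻¹ * (2⁻¹ ^ n * ε) : ℝ≥0) : ℝ≥0∞) ^ (-ρ) *
          μ (Metric.closedEBall b ↑(2⁻¹ ^ n * ε)) := by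
        refine (setLIntegral_le_lintegral _ _).trans_eq ?_
        rw [lintegral_tsum fun n => (measurable_const.indicator (hball n)).aemeasurable]
        simp only [lintegral_indicator_const (hball _)]
    _ ≤ ∑' n : ℕ, C * 2 ^ ρ * ((2⁻¹ ^ n * ε : ℝ≥0) : ℝ≥0∞) ^ (α - ρ) :=
        ENNReal.tsum_le_tsum fun n =>
          hμ.rpow_neg_half_mul_measure_closedEBall_le ρ b (by positivity)
    _ = _ := by
        simp only [hscale, ENNReal.tsum_mul_left, ENNReal.tsum_geometric]
        ring

end PseudoEMetricSpace

section NormedAddCommGroup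

variable {E : Type*} [NormedAddCommGroup E]

lemma one_add_enorm_le_one_add_enorm_mul (v b : E) :
    1 + ‖b‖ₑ ≤ (1 + ‖v‖ₑ) * (1 + ‖v - b‖ₑ) := by
  calc 1 + ‖b‖ₑ = 1 + ‖v - (v - b)‖ₑ := by rw [sub_sub_cancel]
    _ ≤ 1 + (‖v‖ₑ + ‖v - b‖ₑ) := by gcongr; exact enorm_sub_le
    _ ≤ 1 + (‖v‖ₑ + ‖v - b‖ₑ) + ‖v‖ₑ * ‖v - b‖ₑ := le_self_add
    _ = (1 + ‖v‖ₑ) * (1 + ‖v - b‖ₑ) := by ring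

lemma enorm_sub_le_one_add_enorm_mul (v a : E) : ‖v - a‖ₑ ≤ (1 + ‖v‖ₑ) * (1 + ‖a‖ₑ) := by
  simpa using le_add_self.trans (one_add_enorm_le_one_add_enorm_mul v (v - a))

lemma one_add_enorm_le_two_mul_of_mem_closedEBall {v b : E} (hv : v ∈ Metric.closedEBall b 1) :
    1 + ‖v‖ₑ ≤ 2 * (1 + ‖b‖ₑ) := by
  rw [Metric.mem_closedEBall, edist_eq_enorm_sub] at hv
  calc 1 + ‖v‖ₑ = 1 + ‖(v - b) + b‖ₑ := by rw [sub_add_cancel]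
    _ ≤ 1 + (1 + ‖b‖ₑ) := by grw [enorm_add_le (v - b) b, hv]
    _ ≤ 1 + (1 + ‖b‖ₑ) + ‖b‖ₑ := le_self_add
    _ = 2 * (1 + ‖b‖ₑ) := by ring

lemma one_add_enorm_le_mul_enorm_sub {v a : E} {T η : ℝ≥0∞} (hη : η ≠ 0) (hv : ‖v‖ₑ ≤ T)
    (hva : η ≤ ‖v - a‖ₑ) : 1 + ‖a‖ₑ ≤ (1 + T) * (η⁻¹ + 1) * ‖v - a‖ₑ := by
  have hone : 1 ≤ η⁻¹ * ‖v - a‖ₑ := by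
    calc 1 = η⁻¹ * η := (ENNReal.inv_mul_cancel hη (ne_top_of_le_ne_top (by simp) hva)).symm
      _ ≤ _ := by gcongr
  calc 1 + ‖a‖ₑ ≤ (1 + ‖v‖ₑ) * (1 + ‖v - a‖ₑ) := one_add_enorm_le_one_add_enorm_mul v a
    _ ≤ (1 + T) * (η⁻¹ * ‖v - a‖ₑ + ‖v - a‖ₑ) := by gcongr
    _ = (1 + T) * (η⁻¹ + 1) * ‖v - a‖ₑ := by ring

lemma one_add_enorm_rpow_mul_enorm_sub_rpow_neg_le {v b : E} {ρ : ℝ} (σ : ℝ) (hρ : 0 ≤ ρ)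
    (h : 1 ≤ ‖v - b‖ₑ) :
    (1 + ‖b‖ₑ) ^ ρ * ((1 + ‖v‖ₑ) ^ σ * ‖v - b‖ₑ ^ (-ρ)) ≤ 2 ^ ρ * (1 + ‖v‖ₑ) ^ (σ + ρ) := by
  have hmul : 1 + ‖b‖ₑ ≤ 2 * (1 + ‖v‖ₑ) * ‖v - b‖ₑ := by
    calc 1 + ‖b‖ₑ ≤ (1 + ‖v‖ₑ) * (1 + ‖v - b‖ₑ) := one_add_enorm_le_one_add_enorm_mul v b
      _ ≤ (1 + ‖v‖ₑ) * (‖v - b‖ₑ + ‖v - b‖ₑ) := by gcongr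
      _ = 2 * (1 + ‖v‖ₑ) * ‖v - b‖ₑ := by ring
  calc (1 + ‖b‖ₑ) ^ ρ * ((1 + ‖v‖ₑ) ^ σ * ‖v - b‖ₑ ^ (-ρ))
      = (1 + ‖v‖ₑ) ^ σ * ((1 + ‖b‖ₑ) ^ ρ * ‖v - b‖ₑ ^ (-ρ)) := by ring
    _ ≤ (1 + ‖v‖ₑ) ^ σ * (2 * (1 + ‖v‖ₑ)) ^ ρ := by
        grw [rpow_mul_rpow_neg_le_of_le_mul hρ hmul]
    _ = 2 ^ ρ * (1 + ‖v‖ₑ) ^ (σ + ρ) := by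
        rw [ENNReal.mul_rpow_of_nonneg _ _ hρ, ENNReal.rpow_add _ _ (by simp) (by finiteness)]
        ring

section Weights

variable {ι κ : Type*} [Fintype ι] [Fintype κ] {s r : ℝ}

/-- The integrand `∏ⱼ ‖v - aⱼ‖ ^ s / ∏ᵢ ‖v - bᵢ‖ ^ r`. It is `ℝ≥0∞`-valued, so that for `0 < r` a
pole `v = bᵢ` that is not cancelled by a zero has value `⊤`. -/
def rationalWeight (s r : ℝ) (a : ι → E) (b : κ → E) (v : E) : ℝ≥0∞ :=
  (∏ j, ‖v - a j‖ₑ ^ s) * ∏ i, ‖v - b i‖ₑ ^ (-r)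

/-- The quantity `∏ⱼ (1 + ‖aⱼ‖) ^ s / ∏ᵢ (1 + ‖bᵢ‖) ^ r` to which integrals of `rationalWeight`
are compared. -/
def decoupledWeight (s r : ℝ) (a : ι → E) (b : κ → E) : ℝ≥0∞ :=
  (∏ j, (1 + ‖a j‖ₑ) ^ s) * ∏ i, (1 + ‖b i‖ₑ) ^ (-r)

lemma decoupledWeight_ne_top (a : ι → E) (b : κ → E) :
    decoupledWeight s r a b ≠ ⊤ :=
  ENNReal.mul_ne_top (ENNReal.prod_ne_top fun j _ => by finiteness)
    (ENNReal.prod_ne_top fun i _ => by finiteness)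

lemma rationalWeight_le_decoupledWeight_mul (hs : 0 ≤ s) (a : ι → E) (b : κ → E) (v : E) :
    rationalWeight s r a b v ≤ decoupledWeight s r a b * ((1 + ‖v‖ₑ) ^ (s * Fintype.card ι) *
      (1 + ∑ i, (1 + ‖b i‖ₑ) ^ (r * Fintype.card κ) * ‖v - b i‖ₑ ^ (-(r * Fintype.card κ)))) := by
  have hzeros : ∏ j, ‖v - a j‖ₑ ^ s ≤
      (1 + ‖v‖ₑ) ^ (s * Fintype.card ι) * ∏ j, (1 + ‖a j‖ₑ) ^ s := by
    calc ∏ j, ‖v - a j‖ₑ ^ s ≤ ∏ j, (1 + ‖v‖ₑ) ^ s * (1 + ‖a j‖ₑ) ^ s := by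
          gcongr with j
          rw [← ENNReal.mul_rpow_of_nonneg _ _ hs]
          gcongr
          exact enorm_sub_le_one_add_enorm_mul v (a j)
      _ = _ := by
          rw [Finset.prod_mul_distrib, Finset.prod_const, Finset.card_univ, ENNReal.rpow_mul,
            ENNReal.rpow_natCast]
  have hpole (i : κ) : ‖v - b i‖ₑ ^ (-r) =
      (1 + ‖b i‖ₑ) ^ (-r) * ((1 + ‖b i‖ₑ) ^ r * ‖v - b i‖ₑ ^ (-r)) := by
    rw [← mul_assoc, ← ENNReal.rpow_add _ _ (by simp) (by finiteness), neg_add_cancel,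
      ENNReal.rpow_zero, one_mul]
  have hpoles : ∏ i, ‖v - b i‖ₑ ^ (-r) ≤ (∏ i, (1 + ‖b i‖ₑ) ^ (-r)) *
      (1 + ∑ i, (1 + ‖b i‖ₑ) ^ (r * Fintype.card κ) * ‖v - b i‖ₑ ^ (-(r * Fintype.card κ))) := by
    calc ∏ i, ‖v - b i‖ₑ ^ (-r)
        = (∏ i, (1 + ‖b i‖ₑ) ^ (-r)) * ∏ i, (1 + ‖b i‖ₑ) ^ r * ‖v - b i‖ₑ ^ (-r) := by
          rw [← Finset.prod_mul_distrib, Finset.prod_congr rfl fun i _ => hpole i]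
      _ ≤ _ := by
          grw [prod_le_one_add_sum_pow_card fun i => (1 + ‖b i‖ₑ) ^ r * ‖v - b i‖ₑ ^ (-r)]
          simp only [mul_pow, ← neg_mul, ENNReal.rpow_mul, ENNReal.rpow_natCast, le_refl]
  calc rationalWeight s r a b v ≤ _ := mul_le_mul' hzeros hpoles
    _ = _ := by rw [decoupledWeight]; ring

lemma decoupledWeight_le_mul_rationalWeight (hs : 0 ≤ s) (hr : 0 ≤ r) {A B : ℝ≥0∞} (hB₀ : B ≠ 0)
    (hB : B ≠ ⊤) {a : ι → E} {b : κ → E} {v : E}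
    (ha : ∀ j, 1 + ‖a j‖ₑ ≤ A * ‖v - a j‖ₑ) (hb : ∀ i, ‖v - b i‖ₑ ≤ B * (1 + ‖b i‖ₑ)) :
    decoupledWeight s r a b ≤
      (A ^ s) ^ Fintype.card ι * (B ^ r) ^ Fintype.card κ * rationalWeight s r a b v := by
  calc decoupledWeight s r a b
      ≤ (∏ j, A ^ s * ‖v - a j‖ₑ ^ s) * ∏ i, B ^ r * ‖v - b i‖ₑ ^ (-r) := by
        unfold decoupledWeight
        gcongr with j _ i _
        · rw [← ENNReal.mul_rpow_of_nonneg _ _ hs]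
          gcongr
          exact ha j
        · exact rpow_neg_le_mul_rpow_neg_of_le_mul hr hB₀ hB (hb i)
    _ = _ := by
        simp only [Finset.prod_mul_distrib, Finset.prod_const, Finset.card_univ, rationalWeight]
        ring

end Weights

section Measure

variable [MeasurableSpace E] {μ : Measure E} {α q : ℝ} {C : ℝ≥0}

lemma IsUpperRegular.exists_le_measure_closedEBall_diff_iUnion (hμ : IsUpperRegular μ α C)
    (hα : 0 < α) (hμ₀ : μ ≠ 0) (ι : Type*) [Finite ι] :
    ∃ T η c : ℝ≥0, 0 < η ∧ 0 < c ∧ ∀ a : ι → E,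
      c ≤ μ (Metric.closedEBall 0 T \ ⋃ j, Metric.closedEBall (a j) η) := by
  have := Fintype.ofFinite ι
  obtain ⟨n, hn⟩ := exists_pos_ball (0 : E) hμ₀
  have hball : 0 < μ (Metric.closedEBall (0 : E) (n : ℝ≥0)) := by
    refine hn.trans_le (measure_mono ?_)
    rw [Metric.closedEBall_coe]
    exact Metric.ball_subset_closedBall
  obtain ⟨η, hη, hη_small⟩ : ∃ η : ℝ≥0, 0 < η ∧
      Fintype.card ι * (C * (η : ℝ≥0∞) ^ α) < μ (Metric.closedEBall (0 : E) (n : ℝ≥0)) := by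
    obtain ⟨δ, hδ, hδ_small⟩ := ENNReal.exists_nnreal_pos_mul_lt
      (a := Fintype.card ι * C) (by finiteness) hball.ne'
    refine ⟨δ ^ α⁻¹, by positivity, ?_⟩
    rwa [← ENNReal.coe_rpow_of_nonneg _ hα.le, NNReal.rpow_inv_rpow hα.ne', ← mul_assoc, mul_comm]
  obtain ⟨c, hc, hc_le⟩ := ENNReal.lt_iff_exists_nnreal_btwn.1 (tsub_pos_of_lt hη_small)
  refine ⟨n, η, c, hη, by exact_mod_cast hc, fun a => hc_le.le.trans ?_⟩
  have hunion : μ (⋃ j, Metric.closedEBall (a j) η) ≤ Fintype.card ι * (C * (η : ℝ≥0∞) ^ α) := by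
    calc _ ≤ ∑ j, μ (Metric.closedEBall (a j) η) := measure_iUnion_fintype_le _ _
      _ ≤ ∑ _ : ι, C * (η : ℝ≥0∞) ^ α := Finset.sum_le_sum fun j _ => hμ (a j) η hη
      _ = _ := by simp
  exact (tsub_le_tsub_left hunion _).trans le_measure_sdiff

variable [OpensMeasurableSpace E]

lemma IsUpperRegular.lintegral_one_add_enorm_rpow_ne_top (hμ : IsUpperRegular μ α C) (hq : 0 ≤ q)
    (hM : ∫⁻ v, ‖v‖ₑ ^ q ∂μ ≠ ⊤) : ∫⁻ v, (1 + ‖v‖ₑ) ^ q ∂μ ≠ ⊤ := by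
  have hpointwise (v : E) : (1 + ‖v‖ₑ) ^ q ≤
      2 ^ q * ((Metric.closedEBall 0 1).indicator 1 v + ‖v‖ₑ ^ q) := by
    by_cases hv : v ∈ Metric.closedEBall 0 1
    · rw [Set.indicator_of_mem hv, Pi.one_apply]
      calc (1 + ‖v‖ₑ) ^ q ≤ 2 ^ q := by
            gcongr
            simpa using one_add_enorm_le_two_mul_of_mem_closedEBall hv
        _ ≤ _ := le_mul_of_one_le_right' le_self_add
    · rw [Set.indicator_of_notMem hv, zero_add, ← ENNReal.mul_rpow_of_nonneg _ _ hq, two_mul]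
      have : 1 ≤ ‖v‖ₑ := by
        rw [Metric.mem_closedEBall, edist_eq_enorm_sub, sub_zero, not_le] at hv
        exact hv.le
      gcongr
  have hball : MeasurableSet (Metric.closedEBall (0 : E) 1) :=
    Metric.isClosed_closedEBall.measurableSet
  have hball_mass : μ (Metric.closedEBall 0 1) ≠ ⊤ :=
    ne_top_of_le_ne_top (by finiteness) (by simpa using hμ 0 1 one_pos)
  refine ne_top_of_le_ne_top ?_ (lintegral_mono hpointwise)
  rw [lintegral_const_mul' _ _ (by finiteness),
    lintegral_add_left (measurable_one.indicator hball), lintegral_indicator_one hball]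
  finiteness

lemma one_add_enorm_rpow_mul_measure_closedEBall_le (μ : Measure E) (hq : 0 ≤ q) (b : E) :
    (1 + ‖b‖ₑ) ^ q * μ (Metric.closedEBall b 1) ≤ 2 ^ q * ∫⁻ v, (1 + ‖v‖ₑ) ^ q ∂μ := by
  calc (1 + ‖b‖ₑ) ^ q * μ (Metric.closedEBall b 1)
      = ∫⁻ _ in Metric.closedEBall b 1, (1 + ‖b‖ₑ) ^ q ∂μ := (setLIntegral_const _ _).symm
    _ ≤ ∫⁻ v in Metric.closedEBall b 1, 2 ^ q * (1 + ‖v‖ₑ) ^ q ∂μ := by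
        refine setLIntegral_mono' Metric.isClosed_closedEBall.measurableSet fun v hv => ?_
        rw [← ENNReal.mul_rpow_of_nonneg _ _ hq]
        gcongr
        exact one_add_enorm_le_two_mul_of_mem_closedEBall (Metric.mem_closedEBall_comm.1 hv)
    _ ≤ 2 ^ q * ∫⁻ v, (1 + ‖v‖ₑ) ^ q ∂μ := by
        rw [lintegral_const_mul' _ _ (by finiteness)]
        gcongr
        exact Measure.restrict_le_self

lemma IsUpperRegular.exists_one_add_enorm_rpow_mul_setLIntegral_le (hμ : IsUpperRegular μ α C)
    (hq : 0 ≤ q) (hM : ∫⁻ v, (1 + ‖v‖ₑ) ^ q ∂μ ≠ ⊤) {ρ k : ℝ} (hρ : 0 ≤ ρ) (hρα : ρ < α)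
    (hk : k * α / (α - ρ) ≤ q) :
    ∃ K : ℝ≥0∞, K ≠ ⊤ ∧ ∀ b : E,
      (1 + ‖b‖ₑ) ^ k * ∫⁻ v in Metric.closedEBall b 1, ‖v - b‖ₑ ^ (-ρ) ∂μ ≤ K := by
  obtain ⟨K, hK, hsing⟩ := hμ.exists_setLIntegral_closedEBall_le hρ hρα
  refine ⟨2 ^ q * ∫⁻ v, (1 + ‖v‖ₑ) ^ q ∂μ + K, by finiteness, fun b => ?_⟩
  have hα : 0 < α := hρ.trans_lt hρα
  have hkq : k ≤ q * (α - ρ) / α := by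
    rwa [le_div_iff₀ hα, ← div_le_iff₀ (sub_pos.2 hρα)]
  set B : ℝ≥0∞ := 1 + ‖b‖ₑ
  have hB_one : 1 ≤ B := le_self_add
  have hB_zero : B ≠ 0 := (one_pos.trans_le hB_one).ne'
  have hB_top : B ≠ ⊤ := by finiteness
  -- This radius balances `ε ^ (-ρ) * B ^ (-q)`, the contribution of `‖v - b‖ > ε`, against
  -- `ε ^ (α - ρ)`, that of `‖v - b‖ ≤ ε`.
  obtain ⟨ε, hε⟩ : ∃ ε : ℝ≥0, (ε : ℝ≥0∞) = B ^ (-(q / α)) :=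
    ⟨(B ^ (-(q / α))).toNNReal, ENNReal.coe_toNNReal (by finiteness)⟩
  have hε_pos : 0 < ε := by
    rw [← ENNReal.coe_pos, hε]
    exact ENNReal.rpow_pos hB_zero.bot_lt hB_top
  have hfar : B ^ k * (ε : ℝ≥0∞) ^ (-ρ) ≤ B ^ q := by
    rw [hε, ← ENNReal.rpow_mul, ← ENNReal.rpow_add _ _ hB_zero hB_top]
    refine ENNReal.rpow_le_rpow_of_exponent_le hB_one ?_
    calc k + -(q / α) * -ρ ≤ q * (α - ρ) / α + -(q / α) * -ρ := by gcongr
      _ = q := by field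
  have hnear : B ^ k * (ε : ℝ≥0∞) ^ (α - ρ) ≤ 1 := by
    rw [hε, ← ENNReal.rpow_mul, ← ENNReal.rpow_add _ _ hB_zero hB_top, ← ENNReal.rpow_zero (x := B)]
    refine ENNReal.rpow_le_rpow_of_exponent_le hB_one ?_
    calc k + -(q / α) * (α - ρ) ≤ q * (α - ρ) / α + -(q / α) * (α - ρ) := by gcongr
      _ = 0 := by ring
  simp only [← edist_eq_enorm_sub]
  calc B ^ k * ∫⁻ v in Metric.closedEBall b 1, edist v b ^ (-ρ) ∂μ
      ≤ B ^ k * ((ε : ℝ≥0∞) ^ (-ρ) * μ (Metric.closedEBall b 1) + K * (ε : ℝ≥0∞) ^ (α - ρ)) := by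
        grw [setLIntegral_edist_rpow_neg_le_add μ hρ _ b ε, hsing b ε hε_pos]
    _ = B ^ k * (ε : ℝ≥0∞) ^ (-ρ) * μ (Metric.closedEBall b 1) +
          K * (B ^ k * (ε : ℝ≥0∞) ^ (α - ρ)) := by ring
    _ ≤ 2 ^ q * ∫⁻ v, (1 + ‖v‖ₑ) ^ q ∂μ + K := by
        grw [hfar, hnear, one_add_enorm_rpow_mul_measure_closedEBall_le μ hq b, mul_one]

lemma IsUpperRegular.exists_one_add_enorm_rpow_mul_lintegral_le (hμ : IsUpperRegular μ α C)
    (hM : ∫⁻ v, (1 + ‖v‖ₑ) ^ q ∂μ ≠ ⊤) {ρ σ : ℝ} (hρ : 0 ≤ ρ) (hρα : ρ < α) (hσ : 0 ≤ σ)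
    (hq : (σ + ρ) * α / (α - ρ) ≤ q) :
    ∃ K : ℝ≥0∞, K ≠ ⊤ ∧ ∀ b : E,
      (1 + ‖b‖ₑ) ^ ρ * ∫⁻ v, (1 + ‖v‖ₑ) ^ σ * ‖v - b‖ₑ ^ (-ρ) ∂μ ≤ K := by
  have hσρ : σ + ρ ≤ q := (le_mul_div_sub (by positivity) hρ hρα).trans hq
  obtain ⟨N, hN, hlocal⟩ :=
    hμ.exists_one_add_enorm_rpow_mul_setLIntegral_le (hσρ.trans' (by positivity)) hM hρ hρα hq
  refine ⟨2 ^ σ * N + 2 ^ ρ * ∫⁻ v, (1 + ‖v‖ₑ) ^ q ∂μ, by finiteness, fun b => ?_⟩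
  have hball : MeasurableSet (Metric.closedEBall b 1) := Metric.isClosed_closedEBall.measurableSet
  have hnear : (1 + ‖b‖ₑ) ^ ρ *
      ∫⁻ v in Metric.closedEBall b 1, (1 + ‖v‖ₑ) ^ σ * ‖v - b‖ₑ ^ (-ρ) ∂μ ≤ 2 ^ σ * N := by
    calc _ ≤ (1 + ‖b‖ₑ) ^ ρ *
          ∫⁻ v in Metric.closedEBall b 1, (2 * (1 + ‖b‖ₑ)) ^ σ * ‖v - b‖ₑ ^ (-ρ) ∂μ := by
          refine mul_le_mul_right (setLIntegral_mono' hball fun v hv => ?_) _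
          gcongr
          exact one_add_enorm_le_two_mul_of_mem_closedEBall hv
      _ = 2 ^ σ * ((1 + ‖b‖ₑ) ^ (σ + ρ) *
          ∫⁻ v in Metric.closedEBall b 1, ‖v - b‖ₑ ^ (-ρ) ∂μ) := by
          rw [lintegral_const_mul' _ _ (by finiteness), ENNReal.mul_rpow_of_nonneg _ _ hσ,
            ENNReal.rpow_add _ _ (by simp) (by finiteness)]
          ring
      _ ≤ 2 ^ σ * N := by grw [hlocal b]
  have hfar : (1 + ‖b‖ₑ) ^ ρ *
      ∫⁻ v in (Metric.closedEBall b 1)ᶜ, (1 + ‖v‖ₑ) ^ σ * ‖v - b‖ₑ ^ (-ρ) ∂μ ≤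
        2 ^ ρ * ∫⁻ v, (1 + ‖v‖ₑ) ^ q ∂μ := by
    rw [← lintegral_const_mul' _ _ (by finiteness), ← lintegral_const_mul' _ _ (by finiteness)]
    refine (setLIntegral_mono' hball.compl fun v hv => ?_).trans (setLIntegral_le_lintegral _ _)
    rw [Set.mem_compl_iff, Metric.mem_closedEBall, edist_eq_enorm_sub, not_le] at hv
    refine (one_add_enorm_rpow_mul_enorm_sub_rpow_neg_le σ hρ hv.le).trans ?_
    gcongr
    exact le_self_add
  rw [← lintegral_add_compl _ hball, mul_add]
  exact add_le_add hnear hfar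

lemma IsUpperRegular.exists_lintegral_rationalWeight_le (hμ : IsUpperRegular μ α C)
    (hM : ∫⁻ v, ‖v‖ₑ ^ q ∂μ ≠ ⊤) (ι κ : Type*) [Fintype ι] [Fintype κ] {s r : ℝ}
    (hs : 0 ≤ s) (hr : 0 ≤ r) (hrα : r * Fintype.card κ < α)
    (hq : (s * Fintype.card ι + r * Fintype.card κ) * α / (α - r * Fintype.card κ) ≤ q) :
    ∃ K : ℝ≥0∞, K ≠ ⊤ ∧ ∀ (a : ι → E) (b : κ → E),
      ∫⁻ v, rationalWeight s r a b v ∂μ ≤ K * decoupledWeight s r a b := by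
  set σ := s * Fintype.card ι
  set ρ := r * Fintype.card κ
  have hσ : 0 ≤ σ := by positivity
  have hρ : 0 ≤ ρ := by positivity
  have hσρ : σ + ρ ≤ q := (le_mul_div_sub (by positivity) hρ hrα).trans hq
  have hσq : σ ≤ q := hσρ.trans' (le_add_of_nonneg_right hρ)
  have hM' := hμ.lintegral_one_add_enorm_rpow_ne_top (hσ.trans hσq) hM
  obtain ⟨N, hN, hpole⟩ :=
    hμ.exists_one_add_enorm_rpow_mul_lintegral_le hM' hρ hrα hσ hq
  refine ⟨∫⁻ v, (1 + ‖v‖ₑ) ^ q ∂μ + Fintype.card κ * N, by finiteness, fun a b => ?_⟩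
  have hsum : ∫⁻ v, (1 + ‖v‖ₑ) ^ σ * (1 + ∑ i, (1 + ‖b i‖ₑ) ^ ρ * ‖v - b i‖ₑ ^ (-ρ)) ∂μ ≤
      ∫⁻ v, (1 + ‖v‖ₑ) ^ q ∂μ + Fintype.card κ * N := by
    simp only [mul_add, mul_one, Finset.mul_sum, mul_left_comm _ ((1 + ‖b _‖ₑ) ^ ρ)]
    have hmeas : Measurable fun v : E => (1 + ‖v‖ₑ) ^ σ := by fun_prop
    have hmeas' (i : κ) : Measurable fun v : E => ‖v - b i‖ₑ ^ (-ρ) := by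
      have : Measurable fun v : E => ‖v - b i‖ₑ := Continuous.measurable (by fun_prop)
      fun_prop
    rw [lintegral_add_left hmeas, lintegral_finsetSum _ (by fun_prop)]
    refine add_le_add (lintegral_mono fun v => ?_) ?_
    · gcongr
      exact le_self_add
    calc _ ≤ ∑ _ : κ, N := by
          gcongr with i
          rw [lintegral_const_mul' _ _ (by finiteness)]
          exact hpole (b i)
      _ = Fintype.card κ * N := by simp
  calc ∫⁻ v, rationalWeight s r a b v ∂μ
      ≤ ∫⁻ v, decoupledWeight s r a b *
          ((1 + ‖v‖ₑ) ^ σ * (1 + ∑ i, (1 + ‖b i‖ₑ) ^ ρ * ‖v - b i‖ₑ ^ (-ρ))) ∂μ :=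
        lintegral_mono fun v => rationalWeight_le_decoupledWeight_mul hs a b v
    _ = decoupledWeight s r a b *
          ∫⁻ v, (1 + ‖v‖ₑ) ^ σ * (1 + ∑ i, (1 + ‖b i‖ₑ) ^ ρ * ‖v - b i‖ₑ ^ (-ρ)) ∂μ :=
        lintegral_const_mul' _ _ (decoupledWeight_ne_top a b)
    _ ≤ _ := by grw [hsum, mul_comm]

lemma IsUpperRegular.exists_decoupledWeight_le (hμ : IsUpperRegular μ α C) (hα : 0 < α)
    (hμ₀ : μ ≠ 0) (ι κ : Type*) [Fintype ι] [Fintype κ] {s r : ℝ} (hs : 0 ≤ s) (hr : 0 ≤ r) :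
    ∃ K : ℝ≥0∞, K ≠ ⊤ ∧ ∀ (a : ι → E) (b : κ → E),
      decoupledWeight s r a b ≤ K * ∫⁻ v, rationalWeight s r a b v ∂μ := by
  obtain ⟨T, η, c, hη, hc, hmass⟩ := hμ.exists_le_measure_closedEBall_diff_iUnion hα hμ₀ ι
  have hη_inv : (η : ℝ≥0∞)⁻¹ ≠ ⊤ := by simpa using hη.ne'
  have hc_inv : (c : ℝ≥0∞)⁻¹ ≠ ⊤ := by simpa using hc.ne'
  set L : ℝ≥0∞ :=
    (((1 + T) * ((η : ℝ≥0∞)⁻¹ + 1)) ^ s) ^ Fintype.card ι * ((1 + T) ^ r) ^ Fintype.card κ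
  refine ⟨L * (c : ℝ≥0∞)⁻¹, by finiteness, fun a b => ?_⟩
  set G : Set E := Metric.closedEBall 0 T \ ⋃ j, Metric.closedEBall (a j) η
  have hG : MeasurableSet G := Metric.isClosed_closedEBall.measurableSet.diff
    (.iUnion fun j => Metric.isClosed_closedEBall.measurableSet)
  have hpointwise : ∀ v ∈ G, decoupledWeight s r a b ≤ L * rationalWeight s r a b v := by
    intro v ⟨hvT, hva⟩
    rw [Metric.mem_closedEBall, edist_eq_enorm_sub, sub_zero] at hvT
    simp only [Set.mem_iUnion, not_exists, Metric.mem_closedEBall, not_le,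
      edist_eq_enorm_sub] at hva
    refine decoupledWeight_le_mul_rationalWeight hs hr (by simp) (by finiteness)
      (fun j => one_add_enorm_le_mul_enorm_sub (by simpa using hη.ne') hvT (hva j).le) fun i => ?_
    grw [enorm_sub_le_one_add_enorm_mul v (b i), hvT]
  have hintegral : decoupledWeight s r a b * c ≤ L * ∫⁻ v, rationalWeight s r a b v ∂μ := by
    calc _ ≤ decoupledWeight s r a b * μ G := by grw [hmass a]
      _ ≤ ∫⁻ v in G, L * rationalWeight s r a b v ∂μ := by
          rw [← setLIntegral_const]
          exact setLIntegral_mono' hG hpointwise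
      _ ≤ ∫⁻ v, L * rationalWeight s r a b v ∂μ := setLIntegral_le_lintegral _ _
      _ = _ := lintegral_const_mul' _ _ (by finiteness)
  rw [mul_right_comm, ← div_eq_mul_inv]
  exact (ENNReal.le_div_iff_mul_le (by simp [hc.ne']) (by simp)).2 hintegral

end Measure

end NormedAddCommGroup

theorem decoupling_lemma_general {E : Type*} [NormedAddCommGroup E] [MeasurableSpace E]
    [OpensMeasurableSpace E] {μ : Measure E} {α q : ℝ} {C : ℝ≥0} (hμ : IsUpperRegular μ α C)
    (hμ₀ : μ ≠ 0) (hM : ∫⁻ v, ‖v‖ₑ ^ q ∂μ ≠ ⊤) (ι κ : Type*) [Fintype ι] [Fintype κ] {s r : ℝ}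
    (hs : 0 ≤ s) (hr : 0 ≤ r) (hrα : r * Fintype.card κ < α)
    (hq : (s * Fintype.card ι + r * Fintype.card κ) * α / (α - r * Fintype.card κ) ≤ q) :
    ∃ K K' : ℝ, 0 < K ∧ 0 < K' ∧ ∀ (a : ι → E) (b : κ → E),
      ∫⁻ v, rationalWeight s r a b v ∂μ ≤ ENNReal.ofReal K * decoupledWeight s r a b ∧
      decoupledWeight s r a b ≤ ENNReal.ofReal K' * ∫⁻ v, rationalWeight s r a b v ∂μ := by
  obtain ⟨K, hK, hupper⟩ := hμ.exists_lintegral_rationalWeight_le hM ι κ hs hr hrα hq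
  obtain ⟨K', hK', hlower⟩ :=
    hμ.exists_decoupledWeight_le (hrα.trans_le' (by positivity)) hμ₀ ι κ hs hr
  have hle {x : ℝ≥0∞} (hx : x ≠ ⊤) : x ≤ ENNReal.ofReal (x.toReal + 1) := by
    calc x = ENNReal.ofReal x.toReal := (ENNReal.ofReal_toReal hx).symm
      _ ≤ _ := ENNReal.ofReal_le_ofReal (le_add_of_nonneg_right zero_le_one)
  refine ⟨K.toReal + 1, K'.toReal + 1, by positivity, by positivity, fun a b => ⟨?_, ?_⟩⟩
  · grw [hupper a b, ← hle hK]
  · grw [← hle hK', ← hlower a b]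

lemma isUpperRegular_map_ofReal {μ : Measure ℝ} {α C₀ : ℝ} (hα : 0 ≤ α) (hC₀ : 0 ≤ C₀)
    (hreg : ∀ t ε : ℝ, 0 < ε → μ (Set.Icc (t - ε) (t + ε)) ≤ ENNReal.ofReal (C₀ * ε ^ α)) :
    IsUpperRegular (μ.map ((↑) : ℝ → ℂ)) α C₀.toNNReal := by
  intro z ε hε
  rw [Measure.map_apply Complex.measurable_ofReal Metric.isClosed_closedEBall.measurableSet]
  calc _ ≤ μ (Set.Icc (z.re - ε) (z.re + ε)) := by
        refine measure_mono fun t ht => ?_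
        rw [Set.mem_preimage, Metric.closedEBall_coe, mem_closedBall_iff_norm] at ht
        rw [← Real.closedBall_eq_Icc, Metric.mem_closedBall, Real.dist_eq]
        simpa using (Complex.abs_re_le_norm _).trans ht
    _ ≤ ENNReal.ofReal (C₀ * ε ^ α) := hreg z.re ε hε
    _ = _ := by
        rw [ENNReal.ofReal_mul hC₀, ← ENNReal.ofReal_rpow_of_nonneg ε.coe_nonneg hα,
          ENNReal.ofReal_coe_nnreal, ENNReal.ofReal]

lemma lintegral_enorm_rpow_map_ofReal (μ : Measure ℝ) {q : ℝ} (hq : 0 ≤ q) :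
    ∫⁻ z, ‖z‖ₑ ^ q ∂(μ.map ((↑) : ℝ → ℂ)) = ∫⁻ t, ENNReal.ofReal (|t| ^ q) ∂μ := by
  rw [lintegral_map (by fun_prop) Complex.measurable_ofReal]
  congr! 2 with t
  rw [← ENNReal.ofReal_rpow_of_nonneg (abs_nonneg t) hq, ← Real.norm_eq_abs, ← Complex.norm_real,
    ofReal_norm]

lemma ofReal_one_add_norm_rpow {E : Type*} [SeminormedAddCommGroup E] (a : E) (s : ℝ) :
    ENNReal.ofReal ((1 + ‖a‖) ^ s) = (1 + ‖a‖ₑ) ^ s := by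
  rw [← ENNReal.ofReal_rpow_of_pos (by positivity), ENNReal.ofReal_add zero_le_one (norm_nonneg a),
    ENNReal.ofReal_one, ofReal_norm]

/-- Lemma 2.1, decoupling lemma: two-sided bound for integrals of rational
expressions against an α-regular measure with finite q-moment. -/
theorem decoupling_lemma
    (μ : Measure ℝ) [IsProbabilityMeasure μ]
    (α : ℝ) (hα : 0 < α)
    (C₀ : ℝ) (hC₀ : 0 ≤ C₀)
    (hreg : ∀ t ε : ℝ, 0 < ε → μ (Set.Icc (t - ε) (t + ε)) ≤ ENNReal.ofReal (C₀ * ε ^ α))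
    (q : ℝ) (hq : 0 < q)
    (hM : ∫⁻ t : ℝ, ENNReal.ofReal (|t| ^ q) ∂μ < ⊤)
    (l m : ℕ) (s r : ℝ) (hs : 0 < s) (hr : 0 < r)
    (hrm : r * m < α)
    (hqc : (s * l + r * m) * α / (α - r * m) ≤ q) :
    ∃ C C' : ℝ, 0 < C ∧ 0 < C' ∧ ∀ (a : Fin l → ℂ) (b : Fin m → ℂ),
      (∫⁻ v : ℝ, (∏ j, (‖(v : ℂ) - a j‖₊ : ℝ≥0∞) ^ s)
            * ∏ i, (‖(v : ℂ) - b i‖₊ : ℝ≥0∞) ^ (-r) ∂μ)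
        ≤ ENNReal.ofReal C
            * ((∏ j, ENNReal.ofReal ((1 + ‖a j‖) ^ s))
                * ∏ i, ENNReal.ofReal ((1 + ‖b i‖) ^ (-r)))
      ∧ ((∏ j, ENNReal.ofReal ((1 + ‖a j‖) ^ s))
            * ∏ i, ENNReal.ofReal ((1 + ‖b i‖) ^ (-r)))
        ≤ ENNReal.ofReal C'
            * ∫⁻ v : ℝ, (∏ j, (‖(v : ℂ) - a j‖₊ : ℝ≥0∞) ^ s)
                * ∏ i, (‖(v : ℂ) - b i‖₊ : ℝ≥0∞) ^ (-r) ∂μ := by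
  have hreg_map := isUpperRegular_map_ofReal hα.le hC₀ hreg
  have hmoment := (lintegral_enorm_rpow_map_ofReal μ hq.le).trans_ne hM.ne
  have := Measure.isProbabilityMeasure_map (μ := μ) Complex.measurable_ofReal.aemeasurable
  have h := decoupling_lemma_general hreg_map (IsProbabilityMeasure.ne_zero _) hmoment (Fin l)
    (Fin m) hs.le hr.le (by simpa using hrm) (by simpa using hqc)
  simpa only [Complex.isometry_ofReal.isClosedEmbedding.measurableEmbedding.lintegral_map,
    rationalWeight, decoupledWeight, ofReal_one_add_norm_rpow, enorm_eq_nnnorm] using h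

end
end
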